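/- Let p ∈ (0,1) be fixed. Then with high probability sat(G(n,p), C_4) ≥ (3/2)·n·(1+o(1)); that is, for every ε > 0, whp sat(G(n,p), C_4) ≥ (3/2 − ε)·n. -/

import Mathlib

open MeasureTheory Filter Real

/-- The index type of potential edges of a graph on `Fin n`. -/
abbrev EdgeType (n : ℕ) := {e : Sym2 (Fin n) // ¬ e.IsDiag}

/-- The product Bernoulli measure on edge-indicator functions: the binomial
random graph `G(n,p)`. -/
noncomputable def erMeasure (n : ℕ) (p : ℝ) : Measure (EdgeType n → Bool) :=
  Measure.pi fun _ => (PMF.bernoulli (min (Real.toNNReal p) 1) (min_le_right _ _)).toMeasure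

/-- The simple graph determined by an edge-indicator function. -/
def graphOf {n : ℕ} (ω : EdgeType n → Bool) : SimpleGraph (Fin n) :=
  SimpleGraph.fromEdgeSet {e | ∃ h : ¬ e.IsDiag, ω ⟨e, h⟩ = true}

/-- `H` contains a (not necessarily induced) copy of `F`. -/
def ContainsCopy {α β : Type*} (F : SimpleGraph α) (H : SimpleGraph β) : Prop :=
  ∃ f : α → β, Function.Injective f ∧ ∀ ⦃a b⦄, F.Adj a b → H.Adj (f a) (f b)

/-- `H` is `F`-saturated in `G`: `H` is a spanning subgraph of `G` that is `F`-free,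
and adding any edge of `G` missing from `H` creates a copy of `F`. -/
def IsSaturatedIn {V : Type*} {α : Type*} (G H : SimpleGraph V) (F : SimpleGraph α) : Prop :=
  H ≤ G ∧ ¬ ContainsCopy F H ∧
    ∀ v w : V, G.Adj v w → ¬ H.Adj v w →
      ContainsCopy F (H ⊔ SimpleGraph.fromEdgeSet {s(v, w)})

/-- The saturation number `sat(G,F)`: the minimum number of edges of an
`F`-saturated spanning subgraph of `G`. -/
noncomputable def satNum {V α : Type*} (G : SimpleGraph V) (F : SimpleGraph α) : ℕ :=
  sInf {k | ∃ H : SimpleGraph V, IsSaturatedIn G H F ∧ H.edgeSet.ncard = k}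

/-- The cycle `C_m`, as a graph on `ZMod m`. -/
def cycGraph (m : ℕ) : SimpleGraph (ZMod m) :=
  SimpleGraph.fromRel (fun a b => a = b + 1)

lemma exists_saturated {V : Type*} [Finite V] (G : SimpleGraph V) :
    ∃ H : SimpleGraph V, IsSaturatedIn G H (cycGraph 4) := by
  classical
  have hfin : {H : SimpleGraph V | H ≤ G ∧ ¬ ContainsCopy (cycGraph 4) H}.Finite :=
    Set.toFinite _
  have hne : {H : SimpleGraph V | H ≤ G ∧ ¬ ContainsCopy (cycGraph 4) H}.Nonempty := by
    refine ⟨⊥, bot_le, ?_⟩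
    rintro ⟨f, hf, h⟩
    have : (cycGraph 4).Adj 0 1 := by
      simp only [cycGraph, SimpleGraph.fromRel_adj]
      decide
    simpa using h this
  obtain ⟨H, hH⟩ := hfin.exists_maximal hne
  refine ⟨H, hH.prop.1, hH.prop.2, fun v w hvw hn => ?_⟩
  by_contra hc
  have hle : H ⊔ SimpleGraph.fromEdgeSet {s(v, w)} ≤ G := by
    refine sup_le hH.prop.1 ?_
    intro x y hxy
    simp only [SimpleGraph.fromEdgeSet_adj, Set.mem_singleton_iff, Sym2.eq_iff] at hxy
    rcases hxy.1 with ⟨rfl, rfl⟩ | ⟨rfl, rfl⟩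
    · exact hvw
    · exact hvw.symm
  have := hH.le_of_ge (y := H ⊔ SimpleGraph.fromEdgeSet {s(v, w)}) ⟨hle, hc⟩ le_sup_left
  apply hn
  apply this
  right
  simp [hvw.ne]

lemma cyc4_adj_succ (i : ZMod 4) : (cycGraph 4).Adj i (i + 1) := by
  simp only [cycGraph, SimpleGraph.fromRel_adj]
  revert i; decide

/-- Walks of length three. -/
def Walk3 {V : Type*} (H : SimpleGraph V) (u v : V) : Prop :=
  ∃ x y, H.Adj u x ∧ H.Adj x y ∧ H.Adj y v

lemma Walk3.symm {V : Type*} {H : SimpleGraph V} {u v : V} (h : Walk3 H u v) : Walk3 H v u := by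
  obtain ⟨x, y, h1, h2, h3⟩ := h
  exact ⟨y, x, h3.symm, h2.symm, h1.symm⟩

lemma sat_walk {V : Type*} {G H : SimpleGraph V} (h : IsSaturatedIn G H (cycGraph 4))
    {v w : V} (hvw : G.Adj v w) (hn : ¬ H.Adj v w) : Walk3 H v w := by
  obtain ⟨f, hf, hadj⟩ := h.2.2 v w hvw hn
  have key : ∃ i : ZMod 4, ¬ H.Adj (f i) (f (i + 1)) := by
    by_contra hc
    push Not at hc
    apply h.2.1
    refine ⟨f, hf, fun a b hab => ?_⟩
    simp only [cycGraph, SimpleGraph.fromRel_adj] at hab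
    rcases hab.2 with rfl | rfl
    · exact (hc b).symm
    · exact hc a
  obtain ⟨i, hi⟩ := key
  have hs : ∀ j : ZMod 4, H.Adj (f j) (f (j + 1)) ∨ s(f j, f (j + 1)) = s(v, w) := by
    intro j
    have := hadj (cyc4_adj_succ j)
    rw [SimpleGraph.sup_adj, SimpleGraph.fromEdgeSet_adj] at this
    rcases this with h | h
    · exact Or.inl h
    · exact Or.inr h.1
  have hi' := (hs i).resolve_left hi
  have hoth : ∀ j : ZMod 4, j ≠ i → H.Adj (f j) (f (j + 1)) := by
    intro j hj
    refine (hs j).resolve_right fun hc => ?_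
    rw [← hi', Sym2.eq_iff] at hc
    rcases hc with ⟨h1, h2⟩ | ⟨h1, h2⟩
    · exact hj (hf h1)
    · have h1 := hf h1
      have h2 := hf h2
      clear * - h1 h2
      revert i j; decide
  have h1 := hoth (i + 1) (by clear * -; revert i; decide)
  have h2 := hoth (i + 1 + 1) (by clear * -; revert i; decide)
  have h3 := hoth (i + 1 + 1 + 1) (by clear * -; revert i; decide)
  have h4 : i + 1 + 1 + 1 + 1 = i := by clear * -; revert i; decide
  rw [h4] at h3
  have hw : Walk3 H (f (i + 1)) (f i) := ⟨_, _, h1, h2, h3⟩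
  rw [Sym2.eq_iff] at hi'
  rcases hi' with ⟨e1, e2⟩ | ⟨e1, e2⟩
  · rw [e1, e2] at hw; exact hw.symm
  · rw [e1, e2] at hw; exact hw

/-- Greedy independent set. -/
lemma greedy {V : Type*} [DecidableEq V] (R : V → V → Prop) [DecidableRel R]
    (hsymm : ∀ u v, R u v → R v u) (S : Finset V)
    (D : ℕ) (hD : ∀ u ∈ S, (S.filter (fun v => R u v)).card ≤ D) :
    ∃ I ⊆ S, (∀ u ∈ I, ∀ v ∈ I, u ≠ v → ¬ R u v) ∧ S.card ≤ (D + 1) * I.card := by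
  classical
  have hne : (S.powerset.filter
      (fun I => ∀ u ∈ I, ∀ v ∈ I, u ≠ v → ¬ R u v)).Nonempty := ⟨∅, by simp⟩
  obtain ⟨I, hI, hmax⟩ := Finset.exists_max_image _ Finset.card hne
  simp only [Finset.mem_filter, Finset.mem_powerset] at hI hmax
  refine ⟨I, hI.1, hI.2, ?_⟩
  have hcov : S ⊆ I.biUnion (fun u => insert u (S.filter (fun v => R u v))) := by
    intro v hv
    by_contra hc
    simp only [Finset.mem_biUnion, Finset.mem_insert, Finset.mem_filter, not_exists, not_and,
      not_or] at hc
    have hvI : v ∉ I := fun h => (hc v h).1 rfl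
    have := hmax (insert v I) ⟨?_, ?_⟩
    · rw [Finset.card_insert_of_notMem hvI] at this; omega
    · exact Finset.insert_subset hv hI.1
    · intro x hx y hy hxy
      rw [Finset.mem_insert] at hx hy
      rcases hx with rfl | hx <;> rcases hy with rfl | hy
      · exact absurd rfl hxy
      · exact fun h => (hc y hy).2 hv (hsymm _ _ h)
      · exact (hc x hx).2 hv
      · exact hI.2 x hx y hy hxy
  calc S.card ≤ _ := Finset.card_le_card hcov
    _ ≤ I.card * (D + 1) := Finset.card_biUnion_le_card_mul _ _ _ (fun u hu =>
        (Finset.card_insert_le _ _).trans (Nat.succ_le_succ (hD u (hI.1 hu))))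
    _ = _ := mul_comm _ _

open Classical in
lemma det_bound {V : Type*} [Fintype V] {G H : SimpleGraph V}
    (h : IsSaturatedIn G H (cycGraph 4)) (a K : ℕ)
    (ha : ∀ I : Finset V, (∀ u ∈ I, ∀ v ∈ I, ¬ G.Adj u v) → I.card ≤ a) :
    ∃ b : ℕ, K * b ≤ 2 * H.edgeSet.ncard ∧
      3 * Fintype.card V ≤ 2 * H.edgeSet.ncard + 3 * (b + (2 * K ^ 2 + 3) * a + a * b) := by
  set B : Finset V := Finset.univ.filter (fun v => K < H.degree v) with hB
  set A : Finset V := Finset.univ.filter (fun v => ¬ K < H.degree v) with hA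
  set T : Finset V := Finset.univ.filter
    (fun v => H.degree v ≤ 2 ∧ ∀ x, H.Adj v x → H.degree x ≤ K) with hT
  set L : Finset V := Finset.univ.filter
    (fun v => H.degree v = 1 ∧ ∃ b ∈ B, H.Adj v b) with hL
  have hdeg : ∑ v, H.degree v = 2 * H.edgeSet.ncard := by
    rw [H.sum_degrees_eq_twice_card_edges, ← SimpleGraph.coe_edgeFinset, Set.ncard_coe_finset]
  have hsplit : ∑ v ∈ B, H.degree v + ∑ v ∈ A, H.degree v = ∑ v, H.degree v :=
    Finset.sum_filter_add_sum_filter_not _ _ _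
  have hcard : B.card + A.card = Fintype.card V := by
    rw [← Finset.card_univ]
    exact Finset.card_filter_add_card_filter_not _
  refine ⟨B.card, ?_, ?_⟩
  · rw [← hdeg, mul_comm, ← smul_eq_mul]
    refine le_trans (Finset.card_nsmul_le_sum B (fun v => H.degree v) K ?_) (by omega)
    intro v hv
    exact (Finset.mem_filter.1 hv).2.le
  -- bad vertices without big neighbours
  have hTc : T.card ≤ (2 * K ^ 2 + 3) * a := by
    obtain ⟨I, hIT, hI, hc⟩ := greedy (fun u v => H.Adj u v ∨ Walk3 H u v)
      (fun u v h => h.imp (fun h => h.symm) (fun h => h.symm)) T (2 * K ^ 2 + 2) (by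
        intro u hu
        have hu' := (Finset.mem_filter.1 hu).2
        have hsub : T.filter (fun v => H.Adj u v ∨ Walk3 H u v) ⊆
            H.neighborFinset u ∪ (H.neighborFinset u).biUnion (fun x =>
              (H.neighborFinset x).biUnion (fun y =>
                if H.degree y ≤ K then H.neighborFinset y else ∅)) := by
          intro v hv
          obtain ⟨hvT, hv⟩ := Finset.mem_filter.1 hv
          have hvT := (Finset.mem_filter.1 hvT).2
          rw [Finset.mem_union]
          rcases hv with hv | ⟨x, y, h1, h2, h3⟩
          · left; simpa using hv
          · right
            simp only [Finset.mem_biUnion, SimpleGraph.mem_neighborFinset]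
            refine ⟨x, h1, y, h2, ?_⟩
            rw [if_pos (hvT.2 y h3.symm)]
            simpa using h3
        refine (Finset.card_le_card hsub).trans ((Finset.card_union_le _ _).trans ?_)
        have h1 : (H.neighborFinset u).card ≤ 2 := by simpa using hu'.1
        have h2 : ((H.neighborFinset u).biUnion (fun x =>
              (H.neighborFinset x).biUnion (fun y =>
                if H.degree y ≤ K then H.neighborFinset y else ∅))).card ≤
                (H.neighborFinset u).card * (K * K) := by
          refine Finset.card_biUnion_le_card_mul _ _ _ fun x hx => ?_
          refine (Finset.card_biUnion_le_card_mul _ _ K fun y hy => ?_).trans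
            (Nat.mul_le_mul_right _ ?_)
          · split_ifs with hy
            · simpa using hy
            · simp
          · simpa using hu'.2 x (by simpa using hx)
        nlinarith [Nat.mul_le_mul_right (K * K) h1])
    refine hc.trans (Nat.mul_le_mul_left _ (ha I ?_))
    intro u hu v hv huv
    refine hI u hu v hv huv.ne ?_
    by_cases hH : H.Adj u v
    · exact Or.inl hH
    · exact Or.inr (sat_walk h huv hH)
  -- leaves hanging on big vertices
  have hLc : L.card ≤ a * B.card := by
    have hsub : L ⊆ B.biUnion (fun b => Finset.univ.filter
        (fun v => H.degree v = 1 ∧ H.Adj v b)) := by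
      intro v hv
      obtain ⟨h1, b, hb, hvb⟩ := (Finset.mem_filter.1 hv).2
      simp only [Finset.mem_biUnion, Finset.mem_filter, Finset.mem_univ, true_and]
      exact ⟨b, hb, h1, hvb⟩
    refine (Finset.card_le_card hsub).trans ?_
    rw [mul_comm]
    refine Finset.card_biUnion_le_card_mul _ _ _ fun b hb => ha _ ?_
    intro u hu v hv huv
    obtain ⟨hu1, hub⟩ := (Finset.mem_filter.1 hu).2
    obtain ⟨hv1, hvb⟩ := (Finset.mem_filter.1 hv).2
    have uniq : ∀ w, H.degree w = 1 → H.Adj w b → ∀ x, H.Adj w x → x = b := by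
      intro w hw hwb x hwx
      rw [← SimpleGraph.card_neighborFinset_eq_degree, Finset.card_eq_one] at hw
      obtain ⟨c, hc⟩ := hw
      have e1 : x ∈ H.neighborFinset w := by simpa using hwx
      have e2 : b ∈ H.neighborFinset w := by simpa using hwb
      rw [hc, Finset.mem_singleton] at e1 e2
      rw [e1, e2]
    by_cases hH : H.Adj u v
    · have := uniq u hu1 hub v hH
      subst this
      exact hvb.ne rfl
    · obtain ⟨x, y, h1, h2, h3⟩ := sat_walk h huv hH
      rw [uniq u hu1 hub x h1, uniq v hv1 hvb y h3.symm] at h2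
      exact h2.ne rfl
  -- double counting
  have hdc : ∑ v ∈ A, (B.filter (fun b => H.Adj v b)).card ≤ ∑ b ∈ B, H.degree b := by
    have := Finset.sum_card_bipartiteAbove_eq_sum_card_bipartiteBelow
      (s := A) (t := B) (fun v b => H.Adj v b)
    simp only [Finset.bipartiteAbove, Finset.bipartiteBelow] at this
    rw [this]
    refine Finset.sum_le_sum fun b hb => ?_
    rw [← SimpleGraph.card_neighborFinset_eq_degree]
    refine Finset.card_le_card fun v hv => ?_
    simpa using (Finset.mem_filter.1 hv).2.symm
  have hpt : ∀ v ∈ A, 3 ≤ H.degree v + (B.filter (fun b => H.Adj v b)).card +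
      3 * (if v ∈ T then 1 else 0) + 3 * (if v ∈ L then 1 else 0) := by
    intro v hv
    by_cases hvT : v ∈ T
    · simp only [hvT, if_true]; omega
    by_cases hvL : v ∈ L
    · simp only [hvL, if_true]; omega
    by_cases h3 : 3 ≤ H.degree v
    · omega
    have : ∃ b, H.Adj v b ∧ K < H.degree b := by
      by_contra hc
      push Not at hc
      exact hvT (Finset.mem_filter.2 ⟨Finset.mem_univ _, by omega, hc⟩)
    obtain ⟨b, hvb, hb⟩ := this
    have hbB : b ∈ B := Finset.mem_filter.2 ⟨Finset.mem_univ _, hb⟩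
    have hpos : 0 < (B.filter (fun b => H.Adj v b)).card :=
      Finset.card_pos.2 ⟨b, Finset.mem_filter.2 ⟨hbB, hvb⟩⟩
    have hd0 : 0 < H.degree v := (H.degree_pos_iff_exists_adj v).2 ⟨b, hvb⟩
    have hd1 : H.degree v ≠ 1 := fun hd =>
      hvL (Finset.mem_filter.2 ⟨Finset.mem_univ _, hd, b, hbB, hvb⟩)
    omega
  have hsum := Finset.sum_le_sum hpt
  rw [Finset.sum_const, Finset.sum_add_distrib, Finset.sum_add_distrib, Finset.sum_add_distrib,
    ← Finset.mul_sum, ← Finset.mul_sum, smul_eq_mul] at hsum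
  have hT' : ∑ v ∈ A, (if v ∈ T then 1 else 0) ≤ T.card := by
    rw [← Finset.sum_filter, ← Finset.card_eq_sum_ones]
    exact Finset.card_le_card fun v hv => (Finset.mem_filter.1 hv).2
  have hL' : ∑ v ∈ A, (if v ∈ L then 1 else 0) ≤ L.card := by
    rw [← Finset.sum_filter, ← Finset.card_eq_sum_ones]
    exact Finset.card_le_card fun v hv => (Finset.mem_filter.1 hv).2
  omega

/-- `I` spans no edge of the graph. -/
def IndepIn {V : Type*} (G : SimpleGraph V) (I : Finset V) : Prop :=
  ∀ u ∈ I, ∀ v ∈ I, ¬ G.Adj u v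

instance (n : ℕ) (p : ℝ) : IsProbabilityMeasure (erMeasure n p) := by
  unfold erMeasure; infer_instance

lemma prob_indep (n : ℕ) (p : ℝ) (hp0 : 0 < p) (hp1 : p < 1) (I : Finset (Fin n)) :
    erMeasure n p {ω | IndepIn (graphOf ω) I} ≤ ENNReal.ofReal ((1 - p) ^ (I.card.choose 2)) := by
  classical
  set E : Finset (EdgeType n) := Finset.univ.filter
    (fun e => e.1 ∈ I.offDiag.image (fun x => s(x.1, x.2))) with hE
  have hEc : E.card = I.card.choose 2 := by
    rw [← Sym2.card_image_offDiag]
    rw [← Finset.card_map (Function.Embedding.subtype _)]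
    congr 1
    ext e
    simp only [hE, Finset.mem_map, Finset.mem_filter, Finset.mem_univ, true_and,
      Function.Embedding.subtype_apply, Subtype.exists, exists_and_right, exists_eq_right]
    constructor
    · rintro ⟨h1, h2⟩
      exact h2
    · intro h2
      refine ⟨?_, h2⟩
      simp only [Finset.mem_image, Finset.mem_offDiag] at h2
      obtain ⟨⟨x, y⟩, hx, rfl⟩ := h2
      simpa using hx.2.2
  have hsub : {ω | IndepIn (graphOf ω) I} ⊆
      Set.pi Set.univ (fun e : EdgeType n => if e ∈ E then ({false} : Set Bool) else Set.univ) := by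
    intro ω hω e _
    show ω e ∈ (if e ∈ E then ({false} : Set Bool) else Set.univ)
    split_ifs with he
    · obtain ⟨e, hd⟩ := e
      have he := (Finset.mem_filter.1 he).2
      simp only [Finset.mem_image, Finset.mem_offDiag] at he
      obtain ⟨x, hx, rfl⟩ := he
      have := hω x.1 hx.1 x.2 hx.2.1
      rw [Set.mem_singleton_iff, ← Bool.not_eq_true]
      intro ht
      apply this
      simp only [graphOf, SimpleGraph.fromEdgeSet_adj, Set.mem_setOf_eq]
      exact ⟨⟨hd, ht⟩, hx.2.2⟩
    · trivial
  refine (measure_mono hsub).trans ?_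
  rw [erMeasure, Measure.pi_pi]
  have hq : (PMF.bernoulli (min (Real.toNNReal p) 1) (min_le_right _ _)).toMeasure {false}
      = ENNReal.ofReal (1 - p) := by
    rw [PMF.toMeasure_apply_singleton _ _ (measurableSet_singleton _)]
    rw [PMF.bernoulli_apply]
    have hmin : min (Real.toNNReal p) 1 = Real.toNNReal p := by
      rw [min_eq_left]; rw [Real.toNNReal_le_one]; exact hp1.le
    simp only [cond_false, hmin]
    rw [ENNReal.ofReal_sub _ hp0.le, ENNReal.ofReal_one]
    norm_cast
  have : ∀ e : EdgeType n, (PMF.bernoulli (min (Real.toNNReal p) 1) (min_le_right _ _)).toMeasure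
      (if e ∈ E then ({false} : Set Bool) else Set.univ) =
      if e ∈ E then ENNReal.ofReal (1 - p) else 1 := by
    intro e
    split_ifs
    · exact hq
    · exact measure_univ
  simp only [this]
  rw [Finset.prod_ite_mem, Finset.univ_inter, Finset.prod_const, hEc,
    ENNReal.ofReal_pow (by linarith)]

lemma prob_exists_indep (n m : ℕ) (p : ℝ) (hp0 : 0 < p) (hp1 : p < 1) :
    erMeasure n p {ω | ∃ I : Finset (Fin n), I.card = m ∧ IndepIn (graphOf ω) I} ≤
      ENNReal.ofReal ((n : ℝ) ^ m * (1 - p) ^ (m.choose 2)) := by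
  have hsub : {ω : EdgeType n → Bool | ∃ I : Finset (Fin n), I.card = m ∧ IndepIn (graphOf ω) I} ⊆
      ⋃ I ∈ Finset.powersetCard m (Finset.univ : Finset (Fin n)),
        {ω | IndepIn (graphOf ω) I} := by
    rintro ω ⟨I, hI, h⟩
    simp only [Set.mem_iUnion]
    exact ⟨I, by simp [hI], h⟩
  refine (measure_mono hsub).trans ((measure_biUnion_finset_le _ _).trans ?_)
  have h1 : ∀ I ∈ Finset.powersetCard m (Finset.univ : Finset (Fin n)),
      erMeasure n p {ω | IndepIn (graphOf ω) I} ≤ ENNReal.ofReal ((1 - p) ^ (m.choose 2)) := by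
    intro I hI
    have := prob_indep n p hp0 hp1 I
    rwa [(Finset.mem_powersetCard.1 hI).2] at this
  refine (Finset.sum_le_card_nsmul _ _ _ h1).trans ?_
  rw [Finset.card_powersetCard, Finset.card_univ, Fintype.card_fin, nsmul_eq_mul,
    ← ENNReal.ofReal_natCast, ← ENNReal.ofReal_mul (by positivity)]
  apply ENNReal.ofReal_le_ofReal
  have : (0 : ℝ) ≤ (1 - p) ^ (m.choose 2) := pow_nonneg (by linarith) _
  refine mul_le_mul_of_nonneg_right ?_ this
  exact_mod_cast Nat.choose_le_pow n m

/-- The size of independent sets we allow. -/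
def aSize (n : ℕ) : ℕ := Nat.sqrt (Nat.sqrt n)

lemma aSize_le (n : ℕ) : aSize n ^ 4 ≤ n := by
  have h1 := Nat.sqrt_le' n
  have h2 := Nat.sqrt_le' (Nat.sqrt n)
  unfold aSize
  calc Nat.sqrt (Nat.sqrt n) ^ 4 = (Nat.sqrt (Nat.sqrt n) ^ 2) ^ 2 := by ring
    _ ≤ (Nat.sqrt n) ^ 2 := Nat.pow_le_pow_left h2 2
    _ ≤ n := h1

lemma lt_aSize (n : ℕ) : n ≤ (aSize n + 1) ^ 4 := by
  have h1 := Nat.lt_succ_sqrt' n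
  have h2 := Nat.lt_succ_sqrt' (Nat.sqrt n)
  unfold aSize
  calc n ≤ (Nat.sqrt n + 1) ^ 2 := h1.le
    _ ≤ ((Nat.sqrt (Nat.sqrt n) + 1) ^ 2) ^ 2 := Nat.pow_le_pow_left h2 2
    _ = _ := by ring

lemma aSize_tendsto : Tendsto aSize atTop atTop := by
  refine tendsto_atTop.2 fun b => ?_
  filter_upwards [eventually_ge_atTop (b ^ 4)] with n hn
  unfold aSize
  rw [Nat.le_sqrt', Nat.le_sqrt']
  calc (b ^ 2) ^ 2 = b ^ 4 := by ring
    _ ≤ n := hn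

lemma tendsto_prob_bound (p : ℝ) (hp0 : 0 < p) (hp1 : p < 1) :
    Tendsto (fun n : ℕ => (n : ℝ) ^ (aSize n + 1) * (1 - p) ^ ((aSize n + 1).choose 2))
      atTop (nhds 0) := by
  set r := Real.sqrt (1 - p) with hr
  have hr0 : 0 ≤ r := Real.sqrt_nonneg _
  have hr1 : r < 1 := by
    rw [hr, Real.sqrt_lt' one_pos]; linarith
  have hrp : 1 - p = r ^ 2 := (Real.sq_sqrt (by linarith)).symm
  have hlim : Tendsto (fun a : ℕ => ((a : ℝ) + 1) ^ 4 * r ^ a) atTop (nhds 0) := by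
    have h1 := tendsto_pow_const_mul_const_pow_of_lt_one 4 hr0 hr1
    have h2 : Tendsto (fun a : ℕ => 16 * ((a : ℝ) ^ 4 * r ^ a)) atTop (nhds 0) := by
      simpa using h1.const_mul 16
    refine squeeze_zero' (Eventually.of_forall fun a => by positivity) ?_ h2
    filter_upwards [eventually_ge_atTop 1] with a ha
    have ha' : (1 : ℝ) ≤ a := by exact_mod_cast ha
    have : ((a : ℝ) + 1) ^ 4 ≤ (2 * a) ^ 4 := pow_le_pow_left₀ (by positivity) (by linarith) 4
    calc ((a : ℝ) + 1) ^ 4 * r ^ a ≤ (2 * a) ^ 4 * r ^ a :=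
          mul_le_mul_of_nonneg_right this (by positivity)
      _ = _ := by ring
  have hlim' := hlim.comp aSize_tendsto
  refine squeeze_zero' (Eventually.of_forall fun n => ?_) ?_ hlim'
  · have : (0 : ℝ) ≤ 1 - p := by linarith
    positivity
  have hev : ∀ᶠ n in atTop, ((fun a : ℕ => ((a : ℝ) + 1) ^ 4 * r ^ a) ∘ aSize) n ≤ 1 :=
    hlim'.eventually_le_const one_pos
  filter_upwards [hev] with n hn
  simp only [Function.comp] at hn ⊢
  set a := aSize n with ha
  have hn4 : (n : ℝ) ≤ ((a : ℝ) + 1) ^ 4 := by exact_mod_cast lt_aSize n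
  have hch : 2 * (a + 1).choose 2 = a * (a + 1) := by
    rw [Nat.choose_two_right, Nat.mul_div_cancel' (Nat.even_mul_pred_self (a + 1)).two_dvd,
      Nat.add_sub_cancel, mul_comm]
  calc (n : ℝ) ^ (a + 1) * (1 - p) ^ ((a + 1).choose 2)
      = (n : ℝ) ^ (a + 1) * (r ^ a) ^ (a + 1) := by
        rw [hrp, ← pow_mul, hch, pow_mul]
    _ ≤ (((a : ℝ) + 1) ^ 4) ^ (a + 1) * (r ^ a) ^ (a + 1) := by gcongr
    _ = (((a : ℝ) + 1) ^ 4 * r ^ a) ^ (a + 1) := by rw [mul_pow]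
    _ ≤ ((a : ℝ) + 1) ^ 4 * r ^ a := pow_le_of_le_one (by positivity) hn (by omega)

/-- The numerical part: if the independence number is at most `aSize n`, the bound holds. -/
lemma numeric (ε : ℝ) (hε : 0 < ε) : ∃ C : ℕ, 0 < C ∧ ∀ᶠ n : ℕ in atTop, ∀ e b : ℕ,
    (C * (aSize n + 1)) * b ≤ 2 * e →
    3 * n ≤ 2 * e + 3 * (b + (2 * (C * (aSize n + 1)) ^ 2 + 3) * aSize n + aSize n * b) →
    (3 / 2 - ε) * n ≤ (e : ℝ) := by
  obtain ⟨C, hC⟩ := exists_nat_gt (9 / ε)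
  have hC0 : (0 : ℝ) < C := lt_trans (by positivity) hC
  refine ⟨C, by exact_mod_cast hC0, ?_⟩
  obtain ⟨M, hM⟩ := exists_nat_gt (3 * (8 * (C : ℝ) ^ 2 + 3) / ε)
  filter_upwards [aSize_tendsto.eventually_ge_atTop (M + 1)] with n hn e b h1 h2
  by_cases he : 3 * n ≤ 2 * e
  · have : (3 : ℝ) * n ≤ 2 * e := by exact_mod_cast he
    have : 0 ≤ ε * n := by positivity
    linarith
  push Not at he
  have he' : (2 : ℝ) * e ≤ 3 * n := by exact_mod_cast he.le
  have h4 : (aSize n : ℝ) ^ 4 ≤ n := by exact_mod_cast aSize_le n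
  have hn' : (M : ℝ) + 1 ≤ aSize n := by exact_mod_cast hn
  have h1' : (C * ((aSize n : ℝ) + 1)) * b ≤ 2 * e := by exact_mod_cast h1
  have h2' : (3 : ℝ) * n ≤ 2 * e + 3 * (b + (2 * (C * ((aSize n : ℝ) + 1)) ^ 2 + 3) * aSize n
    + aSize n * b) := by exact_mod_cast h2
  set a : ℝ := (aSize n : ℝ) with ha
  have ha1 : 1 ≤ a := by
    have : (0 : ℝ) ≤ M := by positivity
    linarith
  have hCε : 9 < ε * C := by rw [div_lt_iff₀ hε] at hC; linarith
  have hMε : 3 * (8 * (C : ℝ) ^ 2 + 3) ≤ ε * a := by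
    rw [div_lt_iff₀ hε] at hM
    have : (M : ℝ) * ε ≤ a * ε := by gcongr; linarith
    linarith
  -- first part
  have hb : 3 * ((a + 1) * b) ≤ ε * n := by
    have : C * ((a + 1) * b) ≤ 3 * n := by linarith
    have h9 : 9 * ((a + 1) * b) ≤ ε * C * ((a + 1) * b) := by gcongr
    have : ε * (C * ((a + 1) * b)) ≤ ε * (3 * n) := by gcongr
    linarith
  have hc : 3 * ((2 * (C * (a + 1)) ^ 2 + 3) * a) ≤ ε * n := by
    have e1 : (a + 1) ^ 2 ≤ 4 * a ^ 2 := by nlinarith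
    have e2 : 2 * (C * (a + 1)) ^ 2 + 3 ≤ (8 * (C : ℝ) ^ 2 + 3) * a ^ 2 := by
      have : (C : ℝ) ^ 2 * (a + 1) ^ 2 ≤ C ^ 2 * (4 * a ^ 2) := by gcongr
      nlinarith
    calc 3 * ((2 * (C * (a + 1)) ^ 2 + 3) * a) ≤ 3 * ((8 * (C : ℝ) ^ 2 + 3) * a ^ 2 * a) := by gcongr
      _ = 3 * (8 * (C : ℝ) ^ 2 + 3) * a ^ 3 := by ring
      _ ≤ ε * a * a ^ 3 := by gcongr
      _ = ε * a ^ 4 := by ring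
      _ ≤ ε * n := by gcongr
  linarith

lemma indep_le {V : Type*} (G : SimpleGraph V) (a : ℕ)
    (h : ¬ ∃ I : Finset V, I.card = a + 1 ∧ IndepIn G I) :
    ∀ I : Finset V, (∀ u ∈ I, ∀ v ∈ I, ¬ G.Adj u v) → I.card ≤ a := by
  intro I hI
  by_contra hc
  push Not at hc
  obtain ⟨J, hJ, hJc⟩ := Finset.exists_subset_card_eq (Nat.succ_le_of_lt hc)
  exact h ⟨J, hJc, fun u hu v hv => hI u (hJ hu) v (hJ hv)⟩

/-- For fixed `p ∈ (0,1)`, whp `sat(G(n,p), C_4) ≥ (3/2)·n·(1+o(1))`: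
for every `ε > 0`, whp `sat(G(n,p), C_4) ≥ (3/2 − ε)·n`. -/
theorem c4_saturation_lower (p : ℝ) (hp0 : 0 < p) (hp1 : p < 1) (ε : ℝ) (hε : 0 < ε) :
    Tendsto (fun n : ℕ =>
      erMeasure n p {ω |
        (3 / 2 - ε) * n ≤ (satNum (graphOf ω) (cycGraph 4) : ℝ)})
      atTop (nhds 1) := by
  obtain ⟨C, hC, hev⟩ := numeric ε hε
  have hlim := (ENNReal.continuous_ofReal.tendsto 0).comp (tendsto_prob_bound p hp0 hp1)
  rw [ENNReal.ofReal_zero] at hlim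
  have hlim2 : Tendsto (fun n : ℕ => 1 - ENNReal.ofReal
      ((n : ℝ) ^ (aSize n + 1) * (1 - p) ^ ((aSize n + 1).choose 2))) atTop (nhds 1) := by
    have := ENNReal.Tendsto.sub (tendsto_const_nhds (x := (1 : ENNReal)) (f := atTop)) hlim
      (Or.inl ENNReal.one_ne_top)
    rw [tsub_zero] at this
    exact this
  refine tendsto_of_tendsto_of_tendsto_of_le_of_le' hlim2 tendsto_const_nhds ?_
    (Eventually.of_forall fun n => prob_le_one)
  filter_upwards [hev] with n hn
  rw [tsub_le_iff_right]
  have hcov : (Set.univ : Set (EdgeType n → Bool)) ⊆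
      {ω | (3 / 2 - ε) * n ≤ (satNum (graphOf ω) (cycGraph 4) : ℝ)} ∪
      {ω | ∃ I : Finset (Fin n), I.card = aSize n + 1 ∧ IndepIn (graphOf ω) I} := by
    intro ω _
    by_cases hω : ∃ I : Finset (Fin n), I.card = aSize n + 1 ∧ IndepIn (graphOf ω) I
    · exact Or.inr hω
    left
    have hne : {k | ∃ H : SimpleGraph (Fin n), IsSaturatedIn (graphOf ω) H (cycGraph 4) ∧
        H.edgeSet.ncard = k}.Nonempty := by
      obtain ⟨H, hH⟩ := exists_saturated (graphOf ω)
      exact ⟨_, H, hH, rfl⟩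
    obtain ⟨H, hH, hHe⟩ := Nat.sInf_mem hne
    obtain ⟨b, hb1, hb2⟩ := det_bound hH (aSize n) (C * (aSize n + 1)) (indep_le _ _ hω)
    rw [Fintype.card_fin] at hb2
    have := hn _ b hb1 hb2
    rw [hHe] at this
    exact this
  calc (1 : ENNReal) = erMeasure n p Set.univ := measure_univ.symm
    _ ≤ _ := measure_mono hcov
    _ ≤ _ := measure_union_le _ _
    _ ≤ _ := by gcongr; exact prob_exists_indep n _ p hp0 hp1
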